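/- In the free group with involutive generator set E, partitioned as E = ⋃_{a∈Γ} E_a, the resulting Cayley frame is coset acyclic: it contains no coset cycle of any length m ≥ 2. -/

import Mathlib

/-- Reduced concatenation of words over involutive generators. -/
def rmul {E : Type*} [DecidableEq E] : List E → List E → List E
  | l, [] => l
  | l, e :: m =>
    if l.getLast? = some e then rmul l.dropLast m else l ++ e :: m
termination_by l m => m.length

/-!
Each coset `g · G_S` has a unique shortest word, obtained from `g` by deleting its longest suffix
over `S`. Given a coset cycle, replace every `wᵢ` by the shortest word `vᵢ` of
`[wᵢ]_{αᵢ₋₁ ∩ αᵢ}`. Consecutive `vᵢ` are still `αᵢ`-equivalent, and they are distinct because the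
cosets in the definition of a cycle are disjoint. A `vᵢ` of maximal length is not shortest in
either of its cosets by `αᵢ₋₁` and `αᵢ`, so its last letter belongs to both, contradicting its
minimality in the coset by `αᵢ₋₁ ∩ αᵢ`.
-/

open Classical in
/-- The canonical representative of the coset `l · G_S`, for `G_S` the subgroup generated by `S`:
the shortest word in it, obtained from a reduced word `l` by deleting its longest suffix with all
letters in `S`. Two reduced words lie in the same coset iff their representatives agree. It is
defined on all words, reduced or not. -/
noncomputable def cosetRep {E : Type*} (S : Set E) (l : List E) : List E :=
  l.rdropWhile (· ∈ S)

section cosetRep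

variable {E : Type*} {S T : Set E} {l h : List E}

theorem cosetRep_eq_nil_iff : cosetRep S l = [] ↔ ∀ e ∈ l, e ∈ S := by
  simp [cosetRep]

theorem cosetRep_eq_self_iff : cosetRep S l = l ↔ ∀ hl : l ≠ [], l.getLast hl ∉ S := by
  simp [cosetRep]

theorem cosetRep_prefix (S : Set E) (l : List E) : cosetRep S l <+: l :=
  List.rdropWhile_prefix _ _

theorem getLast_cosetRep_notMem (hl : cosetRep S l ≠ []) : (cosetRep S l).getLast hl ∉ S :=
  cosetRep_eq_self_iff.1 (List.rdropWhile_idempotent _ _) hl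

theorem cosetRep_cosetRep_of_subset (hST : S ⊆ T) (l : List E) :
    cosetRep T (cosetRep S l) = cosetRep T l := by
  induction l using List.reverseRecOn with
  | nil => simp [cosetRep]
  | append_singleton l x ih =>
    by_cases hx : x ∈ S
    · simpa [cosetRep, List.rdropWhile_concat, hx, hST hx] using ih
    · simp [cosetRep, List.rdropWhile_concat, hx]

theorem cosetRep_cons (S : Set E) (x : E) (l : List E) :
    cosetRep S (x :: l) =
      if cosetRep S l = [] then cosetRep S [x] else x :: cosetRep S l := by
  simp only [cosetRep, List.rdropWhile, List.reverse_cons, List.dropWhile_append,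
    List.isEmpty_iff, List.reverse_eq_nil_iff]
  split_ifs <;> simp_all

theorem cosetRep_cons_eq_cons_iff (x : E) :
    cosetRep S (x :: l) = cosetRep S (x :: h) ↔ cosetRep S l = cosetRep S h := by
  have singleton_ne_cons {k : List E} (hk : k ≠ []) : cosetRep S [x] ≠ x :: k := fun hx ↦ by
    have := (cosetRep_prefix S [x]).length_le
    simp_all
  rw [cosetRep_cons, cosetRep_cons S x h]
  split_ifs with hl hh hh
  · simp [hl, hh]
  · simp [hl, singleton_ne_cons hh, Ne.symm hh]
  · simp [hh, (singleton_ne_cons hl).symm, hl]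
  · simp

theorem cosetRep_cons_eq_cons_iff_of_ne {x y : E} (hxy : x ≠ y) :
    cosetRep S (x :: l) = cosetRep S (y :: h) ↔
      cosetRep S (x :: l) = [] ∧ cosetRep S (y :: h) = [] := by
  refine ⟨fun heq ↦ ?_, fun ⟨hl, hh⟩ ↦ hl.trans hh.symm⟩
  suffices hnil : cosetRep S (x :: l) = [] from ⟨hnil, heq ▸ hnil⟩
  rcases List.prefix_cons_iff.1 (cosetRep_prefix S (x :: l)) with hnil | ⟨t, ht, -⟩
  · exact hnil
  · have hprefix := cosetRep_prefix S (y :: h)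
    rw [← heq, ht, List.cons_prefix_cons] at hprefix
    exact absurd hprefix.1 hxy

theorem getLast_mem_of_cosetRep_eq (heq : cosetRep S l = cosetRep S h)
    (hlen : h.length ≤ l.length) (hne : l ≠ h) : ∃ hl : l ≠ [], l.getLast hl ∈ S := by
  by_contra! hlast
  have hl : l <+: h := by
    rw [← cosetRep_eq_self_iff.2 hlast, heq]
    exact cosetRep_prefix S h
  exact hne (hl.eq_of_length_le hlen)

theorem exists_cosetRep_inter_eq {m : ℕ} [NeZero m] (w : ZMod m → List E) (A : ZMod m → Set E)
    (hw : ∀ i, cosetRep (A i) (w i) = cosetRep (A i) (w (i + 1))) :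
    ∃ i, cosetRep (A (i - 1) ∩ A i) (w i) = cosetRep (A i ∩ A (i + 1)) (w (i + 1)) := by
  by_contra! hne
  let v i := cosetRep (A (i - 1) ∩ A i) (w i)
  have hv_ne i : v i ≠ v (i + 1) := by simpa [v] using hne i
  have hv i : cosetRep (A i) (v i) = cosetRep (A i) (v (i + 1)) := by
    rw [cosetRep_cosetRep_of_subset Set.inter_subset_right, hw,
      cosetRep_cosetRep_of_subset (by simp)]
  obtain ⟨i, hmax⟩ := Finite.exists_max fun i ↦ (v i).length
  obtain ⟨hnil, hnext⟩ := getLast_mem_of_cosetRep_eq (hv i) (hmax _) (hv_ne i)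
  obtain ⟨_, hprev⟩ : ∃ hnil, (v i).getLast hnil ∈ A (i - 1) := by
    have hstep := hv (i - 1)
    have hstep_ne := hv_ne (i - 1)
    rw [sub_add_cancel] at hstep hstep_ne
    exact getLast_mem_of_cosetRep_eq hstep.symm (hmax _) hstep_ne.symm
  exact getLast_cosetRep_notMem hnil ⟨hprev, hnext⟩

end cosetRep

section rmul

variable {E : Type*} [DecidableEq E]

theorem rmul_nil_left (h : List E) : rmul [] h = h := by
  cases h <;> simp [rmul]

theorem rmul_reverse_cons_self (x : E) (l h : List E) :
    rmul (x :: l).reverse (x :: h) = rmul l.reverse h := by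
  simp [rmul]

theorem rmul_reverse_cons_of_ne {x y : E} (hxy : x ≠ y) (l h : List E) :
    rmul (x :: l).reverse (y :: h) = (x :: l).reverse ++ y :: h := by
  simp [rmul, hxy]

theorem forall_mem_rmul_reverse_iff (S : Set E) (l h : List E) :
    (∀ e ∈ rmul l.reverse h, e ∈ S) ↔ cosetRep S l = cosetRep S h := by
  have cosetRep_nil : cosetRep S [] = [] := by simp [cosetRep_eq_nil_iff]
  induction l generalizing h with
  | nil => simp [rmul_nil_left, cosetRep_nil, eq_comm, cosetRep_eq_nil_iff]
  | cons x l ih =>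
    cases h with
    | nil => simp [rmul, cosetRep_nil, cosetRep_eq_nil_iff, or_comm]
    | cons y h =>
      obtain rfl | hxy := eq_or_ne x y
      · rw [rmul_reverse_cons_self, cosetRep_cons_eq_cons_iff]
        exact ih h
      · rw [rmul_reverse_cons_of_ne hxy, cosetRep_cons_eq_cons_iff_of_ne hxy]
        simp only [cosetRep_eq_nil_iff, List.forall_mem_append, List.mem_reverse]

theorem forall_mem_rmul_reverse_cosetRep (S : Set E) (l : List E) :
    ∀ e ∈ rmul l.reverse (cosetRep S l), e ∈ S :=
  (forall_mem_rmul_reverse_iff S _ _).2 (cosetRep_cosetRep_of_subset subset_rfl l).symm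

end rmul

/-- The Cayley frame of the free group on involutive generators `E`, partitioned
among agents by `ag : E → Γ`, is coset acyclic: it contains no coset cycle of any
length `m ≥ 2`.  Here `g⁻¹h` is the reduced product of the reverse of `g` with `h`,
and `(g,h) ∈ R_α` iff every letter of `g⁻¹h` belongs to an agent in `α`;
`u ∈ [g]_α` iff `(g,u) ∈ R_α`. -/
theorem stmt9 (E Γ : Type*) [DecidableEq E] (ag : E → Γ) (m : ℕ) (hm : 2 ≤ m) :
    ¬ ∃ (w : ZMod m → {l : List E // l.Chain' (· ≠ ·)}) (α : ZMod m → Set Γ),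
      ∀ i : ZMod m,
        (∀ e ∈ rmul (w i).val.reverse (w (i + 1)).val, ag e ∈ α i) ∧
        ¬ ∃ u : {l : List E // l.Chain' (· ≠ ·)},
          (∀ e ∈ rmul (w i).val.reverse u.val, ag e ∈ α (i - 1) ∩ α i) ∧
          (∀ e ∈ rmul (w (i + 1)).val.reverse u.val, ag e ∈ α i ∩ α (i + 1)) := by
  rintro ⟨w, α, hcycle⟩
  have : NeZero m := ⟨by omega⟩
  let A i := ag ⁻¹' α i
  obtain ⟨i, hi⟩ := exists_cosetRep_inter_eq (fun i ↦ (w i).val) A fun i ↦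
    (forall_mem_rmul_reverse_iff (A i) _ _).1 (hcycle i).1
  let u := cosetRep (A (i - 1) ∩ A i) (w i).val
  have hu : u.IsChain (· ≠ ·) := (w i).property.prefix (cosetRep_prefix _ _)
  have hu_left : ∀ e ∈ rmul (w i).val.reverse u, e ∈ A (i - 1) ∩ A i :=
    forall_mem_rmul_reverse_cosetRep _ _
  have hu_right : ∀ e ∈ rmul (w (i + 1)).val.reverse u, e ∈ A i ∩ A (i + 1) := by
    rw [show u = _ from hi]
    exact forall_mem_rmul_reverse_cosetRep _ _
  exact (hcycle i).2 ⟨⟨u, hu⟩, hu_left, hu_right⟩
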